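/- Foster's theorem: Let V be a nonempty finite type, let w be a conductance function on V whose support graph G_w is connected, and let L be its weighted Laplacian. Suppose that for each ordered pair (x, y) ∈ V × V a function f_{x y} : V → ℝ satisfies L f_{x y} = δ_x − δ_y. Then (1/2) · ∑_{x ∈ V} ∑_{y ∈ V} w x y * (f_{x y} x − f_{x y} y) = card V − 1. Equivalently, the sum over the edges e = {u, v} of G_w of the ratio r(u, v)/R_e of effective resistance to edge resistance equals card V − 1, which amounts to the statement that the total canonical measure ∑_e μ(e) = ∑_e (1 − w u v · r(u, v)) equals the genus #E(G_w) − card V + 1. -/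

import Mathlib

open Finset

/-!
Write `L` for the Laplacian and `g x` for a potential of a unit current from `x` to a fixed root
`o`, so that `L (g x) = δ_x - δ_o`. As `L` is self-adjoint, any two solutions `f`, `h` of
`L f = L h = δ_x - δ_y` satisfy `f x - f y = ⟨f, L h⟩ = ⟨L f, h⟩ = h x - h y`, and `g x - g y` is
such a solution. Hence the effective resistance splits as
`r(x, y) = (g x x - g x y) + (g y y - g y x)`. Weighted by `w x y`, the two terms have the same sum
over all ordered pairs, namely `∑ x, L (g x) x = ∑ x, (1 - δ_o x) = card V - 1`.
-/

section WeightedLaplacian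

variable {V R : Type*} [Fintype V] [CommRing R]

/-- The Laplacian of a network with conductances `w`, sending a potential to the net current leaving
each vertex. It is bundled as a linear map so that potentials can be superposed. -/
def weightedLaplacian (w : V → V → R) : (V → R) →ₗ[R] (V → R) where
  toFun f x := ∑ y, w x y * (f x - f y)
  map_add' f g := by
    ext x
    simp only [Pi.add_apply, ← sum_add_distrib]
    exact sum_congr rfl fun y _ => by ring
  map_smul' c f := by
    ext x
    simp only [Pi.smul_apply, smul_eq_mul, RingHom.id_apply, mul_sum]
    exact sum_congr rfl fun y _ => by ring

lemma weightedLaplacian_apply (w : V → V → R) (f : V → R) (x : V) :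
    weightedLaplacian w f x = ∑ y, w x y * (f x - f y) :=
  rfl

lemma dotProduct_weightedLaplacian_comm {w : V → V → R} (hsymm : ∀ x y, w x y = w y x)
    (f g : V → R) : f ⬝ᵥ weightedLaplacian w g = weightedLaplacian w f ⬝ᵥ g := by
  have cross_term : ∑ x, ∑ y, w x y * (f x * g y) = ∑ x, ∑ y, w x y * (f y * g x) := by
    rw [sum_comm]
    simp only [hsymm]
  calc f ⬝ᵥ weightedLaplacian w g
      = ∑ x, ∑ y, w x y * (f x * g x) - ∑ x, ∑ y, w x y * (f x * g y) := by
        simp only [dotProduct, weightedLaplacian_apply, mul_sum, ← sum_sub_distrib]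
        exact sum_congr rfl fun x _ => sum_congr rfl fun y _ => by ring
    _ = ∑ x, ∑ y, w x y * (f x * g x) - ∑ x, ∑ y, w x y * (f y * g x) := by rw [cross_term]
    _ = weightedLaplacian w f ⬝ᵥ g := by
        simp only [dotProduct, weightedLaplacian_apply, sum_mul, ← sum_sub_distrib]
        exact sum_congr rfl fun x _ => sum_congr rfl fun y _ => by ring

variable [DecidableEq V]

lemma sub_eq_sub_of_weightedLaplacian_eq_single_sub_single {w : V → V → R}
    (hsymm : ∀ x y, w x y = w y x) {f g : V → R} {x y : V}
    (hf : weightedLaplacian w f = Pi.single x 1 - Pi.single y 1)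
    (hg : weightedLaplacian w g = Pi.single x 1 - Pi.single y 1) : f x - f y = g x - g y := by
  have reciprocity := dotProduct_weightedLaplacian_comm hsymm f g
  simpa only [hf, hg, dotProduct_sub, sub_dotProduct, dotProduct_single_one,
    single_one_dotProduct] using reciprocity

lemma sum_mul_sub_of_weightedLaplacian_eq_single_sub_single {w : V → V → R} {g : V → V → R}
    {o : V} (hg : ∀ x, weightedLaplacian w (g x) = Pi.single x 1 - Pi.single o 1) :
    ∑ x, ∑ y, w x y * (g x x - g x y) = (Fintype.card V : R) - 1 := by
  simp only [← weightedLaplacian_apply, hg, Pi.sub_apply, Pi.single_eq_same, sum_sub_distrib,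
    sum_const, card_univ, nsmul_one, sum_pi_single', mem_univ, if_true]

theorem stmt_8_general [Nonempty V] (w : V → V → R) (hsymm : ∀ x y, w x y = w y x)
    (F : V → V → V → R)
    (hF : ∀ x y, weightedLaplacian w (F x y) = Pi.single x 1 - Pi.single y 1) :
    ∑ x, ∑ y, w x y * (F x y x - F x y y) = 2 * ((Fintype.card V : R) - 1) := by
  obtain ⟨o⟩ := ‹Nonempty V›
  have resistance_split (x y : V) :
      F x y x - F x y y = (F x o x - F x o y) + (F y o y - F y o x) := by
    have superposition : weightedLaplacian w (F x o - F y o) = Pi.single x 1 - Pi.single y 1 := by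
      rw [map_sub, hF, hF, sub_sub_sub_cancel_right]
    rw [sub_eq_sub_of_weightedLaplacian_eq_single_sub_single hsymm (hF x y) superposition,
      Pi.sub_apply, Pi.sub_apply]
    ring
  have half_sum : ∑ x, ∑ y, w x y * (F x o x - F x o y) = (Fintype.card V : R) - 1 :=
    sum_mul_sub_of_weightedLaplacian_eq_single_sub_single fun x => hF x o
  have half_sum_swap : ∑ x, ∑ y, w x y * (F y o y - F y o x) = (Fintype.card V : R) - 1 := by
    rw [sum_comm, ← half_sum]
    simp only [hsymm]
  simp only [resistance_split, mul_add, sum_add_distrib, half_sum, half_sum_swap, two_mul]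

end WeightedLaplacian

/-- Foster's theorem: summing the ratio of effective resistance to edge resistance over
all edges (each unordered edge counted once, whence the factor `1/2` over ordered pairs)
gives `card V − 1`. -/
theorem stmt_8 {V : Type*} [Fintype V] [Nonempty V] [DecidableEq V]
    (w : V → V → ℝ)
    (hsymm : ∀ x y, w x y = w y x)
    (hnonneg : ∀ x y, 0 ≤ w x y)
    (hdiag : ∀ x, w x x = 0)
    (L : (V → ℝ) → (V → ℝ))
    (hL : ∀ f x, L f x = ∑ y', w x y' * (f x - f y'))
    (G : SimpleGraph V)
    (hG : ∀ x y, G.Adj x y ↔ x ≠ y ∧ 0 < w x y)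
    (hconn : G.Connected)
    (F : V → V → V → ℝ)
    (hF : ∀ x y, L (F x y) =
      (fun t => (if t = x then (1 : ℝ) else 0) - (if t = y then (1 : ℝ) else 0))) :
    (1 / 2 : ℝ) * ∑ x, ∑ y, w x y * (F x y x - F x y y) = (Fintype.card V : ℝ) - 1 := by
  have lap_F (x y : V) : weightedLaplacian w (F x y) = Pi.single x 1 - Pi.single y 1 := by
    ext t; simp [weightedLaplacian_apply, ← hL, hF, Pi.single_apply]
  linarith [stmt_8_general w hsymm F lap_F]
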